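/- arXiv:1411.3553 — 3 statements merged into one kernel-verified Lean document; each statement's English description precedes it below -/
import Mathlib

section
/- Let r, B > 0 and suppose f_ρ belongs to L1^r with norm at most B, witnessed by h_ρ = Σ_{i=1}^n a_i g_i ∈ span(D_n) with Σ_i |a_i| ≤ B and ‖f_ρ − h_ρ‖_∞ ≤ B n^{-r}. Define f_0* = 0 and, for k ≥ 1, f_k* = (1 − 1/k) f_{k−1}* + (Σ_{i=1}^n |a_i| ‖g_i‖_ρ / k) g_k*, where g_k* maximizes ⟨h_ρ − (1 − 1/k) f_{k−1}*, g⟩_ρ over the symmetrized normalized dictionary D_n' = { ± g_i/‖g_i‖_ρ : 1 ≤ i ≤ n }. Then for every k ≥ 1, E(f_k*) − E(f_ρ) = ‖f_k* − f_ρ‖_ρ² ≤ B² ( k^{-1/2} + n^{-r} )². -/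
open MeasureTheory

noncomputable section

/-- The generalization error `E(f) = ∫_Z (f x - y)² dρ`. -/
def genErr {X : Type*} [MeasurableSpace X] (ρ : Measure (X × ℝ)) (f : X → ℝ) : ℝ :=
  ∫ p, (f p.1 - p.2) ^ 2 ∂ρ

/-- The `L²(μ)` inner product `⟨f, g⟩_ρ = ∫ f g dμ`. -/
def innerRho {X : Type*} [MeasurableSpace X] (μ : Measure X) (f g : X → ℝ) : ℝ :=
  ∫ x, f x * g x ∂μ

/-- The `L²(μ)` norm `‖f‖_ρ`. -/
def normRho {X : Type*} [MeasurableSpace X] (μ : Measure X) (f : X → ℝ) : ℝ :=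
  Real.sqrt (innerRho μ f f)

/-- The symmetrized normalized dictionary `D_n' = { ± g_i / ‖g_i‖_ρ }`. -/
def symDict {X : Type*} [MeasurableSpace X] (μ : Measure X) {n : ℕ} (D : Fin n → X → ℝ) :
    Set (X → ℝ) :=
  {g : X → ℝ | ∃ i : Fin n,
    g = (fun x => D i x / normRho μ (D i)) ∨ g = fun x => -(D i x) / normRho μ (D i)}

/-!
Since `y - f_ρ` is orthogonal to every square-integrable function of `x`, the excess error of `f` is
`‖f - f_ρ‖_ρ²`. By the triangle inequality through `h_ρ` it remains to show
`‖h_ρ - f_k*‖_ρ ≤ A / √k` with `A = ∑ |a_i| ‖g_i‖_ρ`. As `h_ρ` is `A` times a convex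
combination of elements of `D_n'`, the maximizer satisfies `⟨e, h_ρ⟩ ≤ A ⟨e, g_k*⟩` for
`e = h_ρ - (1 - 1/k) f_{k-1}*`. Comparing the expansions of `‖e - (A/k) g_k*‖²` and of
`‖e - (1/k) h_ρ‖² = (1 - 1/k)² ‖h_ρ - f_{k-1}*‖²` gives
`b_k ≤ (1 - 1/k)² b_{k-1} + A²/k²` for `b_k = ‖h_ρ - f_k*‖²`, whence `b_k ≤ A²/k` by induction.
-/

section InnerProductSpace

variable {E : Type*} [NormedAddCommGroup E] [InnerProductSpace ℝ E]

lemma norm_sub_relaxed_step_sq_le {h f u : E} {A s : ℝ} (hs : 0 ≤ s) (hu : ‖u‖ ≤ 1)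
    (hgreedy : inner ℝ (h - (1 - s) • f) h ≤ A * inner ℝ (h - (1 - s) • f) u) :
    ‖h - ((1 - s) • f + (s * A) • u)‖ ^ 2 ≤ (1 - s) ^ 2 * ‖h - f‖ ^ 2 + (s * A) ^ 2 := by
  set e := h - (1 - s) • f with he
  have norm_smul_sq (c : ℝ) (v : E) : ‖c • v‖ ^ 2 = c ^ 2 * ‖v‖ ^ 2 := by
    rw [norm_smul, mul_pow, Real.norm_eq_abs, sq_abs]
  have new_residual : h - ((1 - s) • f + (s * A) • u) = e - (s * A) • u := by
    rw [he]; abel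
  have old_residual : (1 - s) • (h - f) = e - s • h := by
    rw [he]; module
  have hu_sq : (s * A) ^ 2 * ‖u‖ ^ 2 ≤ (s * A) ^ 2 :=
    mul_le_of_le_one_right (sq_nonneg _) (pow_le_one₀ (norm_nonneg u) hu)
  have hcross : s * inner ℝ e h ≤ s * (A * inner ℝ e u) :=
    mul_le_mul_of_nonneg_left hgreedy hs
  have hh_sq : 0 ≤ s ^ 2 * ‖h‖ ^ 2 := by positivity
  calc ‖h - ((1 - s) • f + (s * A) • u)‖ ^ 2
      = ‖e‖ ^ 2 - 2 * (s * (A * inner ℝ e u)) + (s * A) ^ 2 * ‖u‖ ^ 2 := by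
        rw [new_residual, norm_sub_sq_real, norm_smul_sq, inner_smul_right, mul_assoc s]
    _ ≤ ‖e‖ ^ 2 - 2 * (s * inner ℝ e h) + s ^ 2 * ‖h‖ ^ 2 + (s * A) ^ 2 := by linarith
    _ = (1 - s) ^ 2 * ‖h - f‖ ^ 2 + (s * A) ^ 2 := by
        rw [← norm_smul_sq (1 - s), old_residual, norm_sub_sq_real e, norm_smul_sq,
          inner_smul_right]

end InnerProductSpace

lemma le_div_of_relaxed_recurrence {b : ℕ → ℝ} {C : ℝ}
    (hb : ∀ k : ℕ, 1 ≤ k → b k ≤ (1 - 1 / (k : ℝ)) ^ 2 * b (k - 1) + C / (k : ℝ) ^ 2)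
    {k : ℕ} (hk : 1 ≤ k) : b k ≤ C / k := by
  induction k, hk using Nat.le_induction with
  | base => simpa using hb 1 le_rfl
  | succ m hm ih =>
    have : (m : ℝ) ≠ 0 := by positivity
    calc b (m + 1)
        ≤ (1 - 1 / ((m + 1 : ℕ) : ℝ)) ^ 2 * b m + C / ((m + 1 : ℕ) : ℝ) ^ 2 :=
          hb (m + 1) (Nat.le_add_left 1 m)
      _ ≤ (1 - 1 / ((m + 1 : ℕ) : ℝ)) ^ 2 * (C / m) + C / ((m + 1 : ℕ) : ℝ) ^ 2 := by gcongr
      _ = C / ((m + 1 : ℕ) : ℝ) := by push_cast; field_simp; ring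

section L2

variable {X : Type*} [MeasurableSpace X] {μ : Measure X} {f g h : X → ℝ}

lemma normRho_sq (μ : Measure X) (f : X → ℝ) : normRho μ f ^ 2 = ∫ x, f x ^ 2 ∂μ := by
  rw [normRho, innerRho, Real.sq_sqrt (integral_nonneg fun x => mul_self_nonneg _)]
  simp only [sq]

lemma innerRho_eq_inner_toLp (hf : MemLp f 2 μ) (hg : MemLp g 2 μ) :
    innerRho μ f g = inner ℝ (hf.toLp f) (hg.toLp g) := by
  rw [innerRho, L2.inner_def]
  refine integral_congr_ae ?_
  filter_upwards [hf.coeFn_toLp, hg.coeFn_toLp] with x hfx hgx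
  rw [hfx, hgx, real_inner_comm]
  rfl

lemma normRho_eq_norm_toLp (hf : MemLp f 2 μ) : normRho μ f = ‖hf.toLp f‖ := by
  rw [normRho, innerRho_eq_inner_toLp hf hf, norm_eq_sqrt_real_inner]

lemma normRho_sub_eq_norm_toLp_sub (hf : MemLp f 2 μ) (hg : MemLp g 2 μ) :
    normRho μ (fun x => f x - g x) = ‖hf.toLp f - hg.toLp g‖ :=
  normRho_eq_norm_toLp (hf.sub hg)

lemma normRho_nonneg (μ : Measure X) (f : X → ℝ) : 0 ≤ normRho μ f :=
  Real.sqrt_nonneg _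

lemma innerRho_const_mul_right (c : ℝ) : innerRho μ f (fun x => c * g x) = c * innerRho μ f g := by
  simp only [innerRho, mul_left_comm _ c, integral_const_mul]

lemma normRho_const_mul (c : ℝ) : normRho μ (fun x => c * f x) = |c| * normRho μ f := by
  rw [← Real.sqrt_sq_eq_abs, normRho, normRho, ← Real.sqrt_mul (sq_nonneg c)]
  simp only [innerRho, mul_mul_mul_comm c, integral_const_mul, sq]

lemma normRho_sub_comm : normRho μ (fun x => f x - g x) = normRho μ (fun x => g x - f x) := by
  simpa using normRho_const_mul (μ := μ) (f := fun x => g x - f x) (-1)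

lemma normRho_sub_le_normRho_sub_add_normRho_sub (hf : MemLp f 2 μ) (hg : MemLp g 2 μ)
    (hh : MemLp h 2 μ) :
    normRho μ (fun x => f x - h x) ≤
      normRho μ (fun x => f x - g x) + normRho μ (fun x => g x - h x) := by
  rw [normRho_sub_eq_norm_toLp_sub hf hh, normRho_sub_eq_norm_toLp_sub hf hg,
    normRho_sub_eq_norm_toLp_sub hg hh]
  exact norm_sub_le_norm_sub_add_norm_sub _ _ _

lemma normRho_le_of_abs_le [IsProbabilityMeasure μ] {C : ℝ} (hf : ∀ᵐ x ∂μ, |f x| ≤ C) :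
    normRho μ f ≤ C := by
  obtain ⟨x, hx⟩ := hf.exists
  refine le_of_sq_le_sq ?_ ((abs_nonneg _).trans hx)
  calc normRho μ f ^ 2 = ∫ x, f x ^ 2 ∂μ := normRho_sq μ f
    _ ≤ ∫ _, C ^ 2 ∂μ :=
        integral_mono_of_nonneg (ae_of_all _ fun x => sq_nonneg (f x)) (integrable_const _)
          (hf.mono fun x hx => sq_le_sq' (abs_le.1 hx).1 (abs_le.1 hx).2)
    _ = C ^ 2 := by simp

lemma innerRho_sum_right {ι : Type*} (s : Finset ι) {D : ι → X → ℝ} (hf : MemLp f 2 μ)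
    (hD : ∀ i ∈ s, MemLp (D i) 2 μ) (a : ι → ℝ) :
    innerRho μ f (fun x => ∑ i ∈ s, a i * D i x) = ∑ i ∈ s, a i * innerRho μ f (D i) := by
  have hint (i : ι) (hi : i ∈ s) : Integrable (fun x => f x * (a i * D i x)) μ :=
    hf.integrable_mul ((hD i hi).const_mul (a i))
  simp only [innerRho, Finset.mul_sum]
  rw [integral_finsetSum s hint]
  exact Finset.sum_congr rfl fun i _ => innerRho_const_mul_right (a i)

lemma normRho_sub_relaxed_step_sq_le (hh : MemLp h 2 μ) (hf : MemLp f 2 μ) (hg : MemLp g 2 μ)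
    {A s : ℝ} (hs : 0 ≤ s) (hg_norm : normRho μ g ≤ 1)
    (hgreedy : innerRho μ (fun x => h x - (1 - s) * f x) h ≤
      A * innerRho μ (fun x => h x - (1 - s) * f x) g) :
    normRho μ (fun x => h x - ((1 - s) * f x + s * A * g x)) ^ 2 ≤
      (1 - s) ^ 2 * normRho μ (fun x => h x - f x) ^ 2 + (s * A) ^ 2 := by
  have hres : MemLp (fun x => h x - (1 - s) * f x) 2 μ := hh.sub (hf.const_mul _)
  have hnew : MemLp (fun x => h x - ((1 - s) * f x + s * A * g x)) 2 μ :=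
    hh.sub ((hf.const_mul _).add (hg.const_mul _))
  have hres_toLp : hres.toLp _ = hh.toLp h - (1 - s) • hf.toLp f := rfl
  have hnew_toLp : hnew.toLp _ = hh.toLp h - ((1 - s) • hf.toLp f + (s * A) • hg.toLp g) := rfl
  rw [innerRho_eq_inner_toLp hres hh, innerRho_eq_inner_toLp hres hg, hres_toLp] at hgreedy
  rw [normRho_eq_norm_toLp hg] at hg_norm
  rw [normRho_eq_norm_toLp hnew, hnew_toLp, normRho_sub_eq_norm_toLp_sub hh hf]
  exact norm_sub_relaxed_step_sq_le hs hg_norm hgreedy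

end L2

section RegressionFunction

lemma integral_mul_condExp_sub_eq_zero {Ω : Type*} {m m₀ : MeasurableSpace Ω} {μ : Measure Ω}
    [IsFiniteMeasure μ] (hm : m ≤ m₀) {W Y : Ω → ℝ} (hW : MemLp W 2 μ)
    (hWm : AEStronglyMeasurable[m] W μ) (hY : MemLp Y 2 μ) :
    ∫ ω, W ω * ((μ[Y|m]) ω - Y ω) ∂μ = 0 := by
  have hWY : Integrable (W * Y) μ := hW.integrable_mul hY
  have hWE : Integrable (W * μ[Y|m]) μ := hW.integrable_mul (hY.condExp one_le_two)
  have pull_out : ∫ ω, (W * Y) ω ∂μ = ∫ ω, (W * μ[Y|m]) ω ∂μ := by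
    rw [← integral_condExp hm]
    exact integral_congr_ae
      (condExp_mul_of_aestronglyMeasurable_left hWm hWY (hY.integrable one_le_two))
  calc ∫ ω, W ω * ((μ[Y|m]) ω - Y ω) ∂μ
      = ∫ ω, (W * μ[Y|m]) ω - (W * Y) ω ∂μ := by simp only [Pi.mul_apply, mul_sub]
    _ = 0 := by rw [integral_sub hWE hWY, pull_out, sub_self]

lemma integral_sub_sq_eq_add_integral_condExp_sub_sq {Ω : Type*} {m m₀ : MeasurableSpace Ω}
    {μ : Measure Ω} [IsFiniteMeasure μ] (hm : m ≤ m₀) {Z Y : Ω → ℝ} (hZ : MemLp Z 2 μ)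
    (hZm : AEStronglyMeasurable[m] Z μ) (hY : MemLp Y 2 μ) :
    ∫ ω, (Z ω - Y ω) ^ 2 ∂μ =
      ∫ ω, (Z ω - (μ[Y|m]) ω) ^ 2 ∂μ + ∫ ω, ((μ[Y|m]) ω - Y ω) ^ 2 ∂μ := by
  have hE : MemLp (μ[Y|m]) 2 μ := hY.condExp one_le_two
  have hZE : MemLp (Z - μ[Y|m]) 2 μ := hZ.sub hE
  have hEY : MemLp (μ[Y|m] - Y) 2 μ := hE.sub hY
  have hsquares : Integrable (fun ω => (Z - μ[Y|m]) ω ^ 2 + (μ[Y|m] - Y) ω ^ 2) μ :=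
    hZE.integrable_sq.add hEY.integrable_sq
  have hcross : Integrable (fun ω => 2 * ((Z - μ[Y|m]) ω * (μ[Y|m] - Y) ω)) μ :=
    (hZE.integrable_mul hEY).const_mul 2
  have orthogonal : ∫ ω, (Z - μ[Y|m]) ω * (μ[Y|m] - Y) ω ∂μ = 0 :=
    integral_mul_condExp_sub_eq_zero hm hZE
      (hZm.sub stronglyMeasurable_condExp.aestronglyMeasurable) hY
  calc ∫ ω, (Z ω - Y ω) ^ 2 ∂μ
      = ∫ ω, ((Z - μ[Y|m]) ω ^ 2 + (μ[Y|m] - Y) ω ^ 2) +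
          2 * ((Z - μ[Y|m]) ω * (μ[Y|m] - Y) ω) ∂μ := by
        congr with ω; simp only [Pi.sub_apply]; ring
    _ = ∫ ω, (Z - μ[Y|m]) ω ^ 2 ∂μ + ∫ ω, (μ[Y|m] - Y) ω ^ 2 ∂μ := by
        rw [integral_add hsquares hcross, integral_add hZE.integrable_sq hEY.integrable_sq,
          integral_const_mul, orthogonal, mul_zero, add_zero]

/- `P` need not be measurable, so `ae_map_iff` does not apply; disintegrating `ρ` along its first
marginal replaces it. -/
lemma ae_map_fst_of_ae {X Y : Type*} [MeasurableSpace X] [MeasurableSpace Y]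
    [StandardBorelSpace Y] [Nonempty Y] {ρ : Measure (X × Y)} [IsFiniteMeasure ρ] {P : X → Prop}
    (h : ∀ᵐ p ∂ρ, P p.1) : ∀ᵐ x ∂ρ.map Prod.fst, P x := by
  rw [← ρ.disintegrate ρ.condKernel] at h
  filter_upwards [Measure.ae_ae_of_ae_compProd h] with x hx
  exact hx.exists.choose_spec

/-- `fρ` is a version of the regression function `x ↦ ∫ y dρ(y|x)`, encoded by `fρ ∘ Prod.fst` being
a version of the conditional expectation of the second coordinate given the first. -/
def IsRegressionFunction {X : Type*} [MeasurableSpace X] (ρ : Measure (X × ℝ)) (fρ : X → ℝ) :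
    Prop :=
  (fun p : X × ℝ => fρ p.1) =ᵐ[ρ]
    ρ[(fun p : X × ℝ => p.2)|MeasurableSpace.comap (Prod.fst : X × ℝ → X) inferInstance]

variable {X : Type*} [MeasurableSpace X] {ρ : Measure (X × ℝ)} [IsFiniteMeasure ρ] {f fρ : X → ℝ}

lemma IsRegressionFunction.memLp (hreg : IsRegressionFunction ρ fρ)
    (hy : MemLp (fun p : X × ℝ => p.2) 2 ρ) :
    MemLp fρ 2 (ρ.map Prod.fst) := by
  obtain ⟨φ, hφ, hφ_eq⟩ := (stronglyMeasurable_condExp (μ := ρ) (f := fun p : X × ℝ => p.2)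
    (m := MeasurableSpace.comap Prod.fst inferInstance)).measurable.exists_eq_measurable_comp
  have hfφ : fρ =ᵐ[ρ.map Prod.fst] φ := by
    refine ae_map_fst_of_ae (P := fun x => fρ x = φ x) ?_
    filter_upwards [hreg] with p hp
    rw [hp, hφ_eq, Function.comp_apply]
  rw [memLp_map_measure_iff ⟨φ, hφ.stronglyMeasurable, hfφ⟩ measurable_fst.aemeasurable]
  exact (hy.condExp one_le_two).ae_eq hreg.symm

lemma genErr_sub_genErr_of_isRegressionFunction (hy : MemLp (fun p : X × ℝ => p.2) 2 ρ)
    (hreg : IsRegressionFunction ρ fρ) (hf : MemLp f 2 (ρ.map Prod.fst)) :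
    genErr ρ f - genErr ρ fρ = normRho (ρ.map Prod.fst) (fun x => f x - fρ x) ^ 2 := by
  set condMean := ρ[(fun p : X × ℝ => p.2)|MeasurableSpace.comap Prod.fst inferInstance]
  have hcondMean : (fun p : X × ℝ => fρ p.1) =ᵐ[ρ] condMean := hreg
  have hdiff : MemLp (fun x => f x - fρ x) 2 (ρ.map Prod.fst) := hf.sub (hreg.memLp hy)
  have hexcess : ∫ p, (f p.1 - fρ p.1) ^ 2 ∂ρ = ∫ p, (f p.1 - condMean p) ^ 2 ∂ρ :=
    integral_congr_ae (hcondMean.mono fun p hp => by simp only [hp])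
  have hnoise : genErr ρ fρ = ∫ p, (condMean p - p.2) ^ 2 ∂ρ :=
    integral_congr_ae (hcondMean.mono fun p hp => by simp only [hp])
  have pythagoras : genErr ρ f =
      ∫ p, (f p.1 - condMean p) ^ 2 ∂ρ + ∫ p, (condMean p - p.2) ^ 2 ∂ρ :=
    integral_sub_sq_eq_add_integral_condExp_sub_sq measurable_fst.comap_le
      (hf.comp_of_map measurable_fst.aemeasurable)
      (hf.aestronglyMeasurable.comp_ae_measurable' measurable_fst.aemeasurable) hy
  rw [normRho_sq, integral_map measurable_fst.aemeasurable hdiff.integrable_sq.aestronglyMeasurable,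
    hexcess, pythagoras, hnoise, add_sub_cancel_right]

end RegressionFunction

section RelaxedGreedy

variable {X : Type*} [MeasurableSpace X] {μ : Measure X} {n : ℕ} {D : Fin n → X → ℝ}

lemma exists_eq_const_mul_of_mem_symDict {g : X → ℝ} (hg : g ∈ symDict μ D) :
    ∃ i, ∃ c : ℝ, |c| = (normRho μ (D i))⁻¹ ∧ g = fun x => c * D i x := by
  have habs (i : Fin n) : |(normRho μ (D i))⁻¹| = (normRho μ (D i))⁻¹ :=
    abs_of_nonneg (inv_nonneg.2 (normRho_nonneg μ (D i)))
  obtain ⟨i, rfl | rfl⟩ := hg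
  · exact ⟨i, (normRho μ (D i))⁻¹, habs i, by simp only [div_eq_inv_mul]⟩
  · exact ⟨i, -(normRho μ (D i))⁻¹, by rw [abs_neg, habs],
      by simp only [div_eq_inv_mul, neg_mul_comm]⟩

lemma memLp_of_mem_symDict (hD : ∀ i, MemLp (D i) 2 μ) {g : X → ℝ} (hg : g ∈ symDict μ D) :
    MemLp g 2 μ := by
  obtain ⟨i, c, -, rfl⟩ := exists_eq_const_mul_of_mem_symDict hg
  exact (hD i).const_mul c

lemma normRho_le_one_of_mem_symDict {g : X → ℝ} (hg : g ∈ symDict μ D) : normRho μ g ≤ 1 := by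
  obtain ⟨i, c, hc, rfl⟩ := exists_eq_const_mul_of_mem_symDict hg
  rw [normRho_const_mul, hc]
  exact inv_mul_le_one

lemma abs_innerRho_le_of_forall_mem_symDict_le {f : X → ℝ} {t : ℝ}
    (ht : ∀ g ∈ symDict μ D, innerRho μ f g ≤ t) {i : Fin n} (hi : 0 < normRho μ (D i)) :
    |innerRho μ f (D i)| ≤ normRho μ (D i) * t := by
  have hpos : innerRho μ f (D i) / normRho μ (D i) ≤ t := by
    simpa only [div_eq_inv_mul, innerRho_const_mul_right] using ht _ ⟨i, Or.inl rfl⟩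
  have hneg : -innerRho μ f (D i) / normRho μ (D i) ≤ t := by
    simpa only [div_eq_inv_mul, ← neg_mul_comm, innerRho_const_mul_right] using
      ht _ ⟨i, Or.inr rfl⟩
  exact abs_le'.2 ⟨(div_le_iff₀' hi).1 hpos, (div_le_iff₀' hi).1 hneg⟩

lemma innerRho_sum_le_of_forall_mem_symDict_le (hD : ∀ i, MemLp (D i) 2 μ)
    (hDpos : ∀ i, 0 < normRho μ (D i)) (a : Fin n → ℝ) {f : X → ℝ} (hf : MemLp f 2 μ) {t : ℝ}
    (ht : ∀ g ∈ symDict μ D, innerRho μ f g ≤ t) :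
    innerRho μ f (fun x => ∑ i, a i * D i x) ≤ (∑ i, |a i| * normRho μ (D i)) * t := by
  rw [innerRho_sum_right _ hf fun i _ => hD i, Finset.sum_mul]
  refine Finset.sum_le_sum fun i _ => ?_
  calc a i * innerRho μ f (D i) ≤ |a i| * |innerRho μ f (D i)| := by
        rw [← abs_mul]; exact le_abs_self _
    _ ≤ |a i| * (normRho μ (D i) * t) := by
        gcongr; exact abs_innerRho_le_of_forall_mem_symDict_le ht (hDpos i)
    _ = |a i| * normRho μ (D i) * t := (mul_assoc _ _ _).symm

/-- `f` is a run of the relaxed greedy algorithm with target `∑ i, a i * D i`, in which `g k` is the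
dictionary element selected at step `k ≥ 1`; the value `g 0` is irrelevant. -/
structure IsRelaxedGreedy (μ : Measure X) (D : Fin n → X → ℝ) (a : Fin n → ℝ)
    (f g : ℕ → X → ℝ) : Prop where
  zero : f 0 = 0
  step : ∀ k : ℕ, 1 ≤ k →
    g k ∈ symDict μ D ∧
    (∀ g' ∈ symDict μ D,
      innerRho μ (fun x => (∑ i, a i * D i x) - (1 - 1 / (k : ℝ)) * f (k - 1) x) g' ≤
        innerRho μ (fun x => (∑ i, a i * D i x) - (1 - 1 / (k : ℝ)) * f (k - 1) x) (g k)) ∧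
    f k = fun x => (1 - 1 / (k : ℝ)) * f (k - 1) x +
      ((∑ i, |a i| * normRho μ (D i)) / (k : ℝ)) * g k x

namespace IsRelaxedGreedy

variable {a : Fin n → ℝ} {f g : ℕ → X → ℝ}

lemma memLp (hrun : IsRelaxedGreedy μ D a f g) (hD : ∀ i, MemLp (D i) 2 μ) (k : ℕ) :
    MemLp (f k) 2 μ := by
  induction k with
  | zero => rw [hrun.zero]; exact MemLp.zero
  | succ k ih =>
    obtain ⟨hg, -, hf⟩ := hrun.step (k + 1) (Nat.le_add_left 1 k)
    rw [hf]
    exact (ih.const_mul _).add ((memLp_of_mem_symDict hD hg).const_mul _)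

lemma normRho_sub_sq_le (hrun : IsRelaxedGreedy μ D a f g) (hD : ∀ i, MemLp (D i) 2 μ)
    (hDpos : ∀ i, 0 < normRho μ (D i)) {k : ℕ} (hk : 1 ≤ k) :
    normRho μ (fun x => (∑ i, a i * D i x) - f k x) ^ 2 ≤
      (1 - 1 / (k : ℝ)) ^ 2 * normRho μ (fun x => (∑ i, a i * D i x) - f (k - 1) x) ^ 2 +
        (∑ i, |a i| * normRho μ (D i)) ^ 2 / (k : ℝ) ^ 2 := by
  obtain ⟨hg, hmax, hf⟩ := hrun.step k hk
  have hh : MemLp (fun x => ∑ i, a i * D i x) 2 μ :=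
    memLp_finsetSum _ fun i _ => (hD i).const_mul (a i)
  have hprev : MemLp (f (k - 1)) 2 μ := hrun.memLp hD (k - 1)
  have hres : MemLp (fun x => (∑ i, a i * D i x) - (1 - 1 / (k : ℝ)) * f (k - 1) x) 2 μ :=
    hh.sub (hprev.const_mul _)
  have hgreedy := innerRho_sum_le_of_forall_mem_symDict_le hD hDpos a hres hmax
  rw [hf, ← div_pow, ← one_div_mul_eq_div (k : ℝ) (∑ i, |a i| * normRho μ (D i))]
  exact normRho_sub_relaxed_step_sq_le hh hprev (memLp_of_mem_symDict hD hg)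
    (one_div_nonneg.2 k.cast_nonneg) (normRho_le_one_of_mem_symDict hg) hgreedy

lemma normRho_sub_le_div_sqrt (hrun : IsRelaxedGreedy μ D a f g) (hD : ∀ i, MemLp (D i) 2 μ)
    (hDpos : ∀ i, 0 < normRho μ (D i)) {k : ℕ} (hk : 1 ≤ k) :
    normRho μ (fun x => (∑ i, a i * D i x) - f k x) ≤
      (∑ i, |a i| * normRho μ (D i)) / √k := by
  have hA : 0 ≤ ∑ i, |a i| * normRho μ (D i) :=
    Finset.sum_nonneg fun i _ => mul_nonneg (abs_nonneg _) (hDpos i).le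
  refine le_of_sq_le_sq ?_ (by positivity)
  rw [div_pow, Real.sq_sqrt k.cast_nonneg]
  exact le_div_of_relaxed_recurrence
    (b := fun k => normRho μ (fun x => (∑ i, a i * D i x) - f k x) ^ 2)
    (fun k hk => hrun.normRho_sub_sq_le hD hDpos hk) hk

end IsRelaxedGreedy

end RelaxedGreedy

theorem relaxed_greedy_approximation_error_general
    {X : Type*} [MeasurableSpace X] (ρ : Measure (X × ℝ)) [IsFiniteMeasure ρ]
    (hy : MemLp (fun p : X × ℝ => p.2) 2 ρ) (fρ : X → ℝ) (hreg : IsRegressionFunction ρ fρ)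
    (n : ℕ) (D : Fin n → X → ℝ) (hD : ∀ i, MemLp (D i) 2 (ρ.map Prod.fst))
    (hDpos : ∀ i, 0 < normRho (ρ.map Prod.fst) (D i))
    (B ε : ℝ) (a : Fin n → ℝ) (ha : ∑ i, |a i| * normRho (ρ.map Prod.fst) (D i) ≤ B)
    (happrox : normRho (ρ.map Prod.fst) (fun x => fρ x - ∑ i, a i * D i x) ≤ ε)
    (fstar gstar : ℕ → X → ℝ) (hrun : IsRelaxedGreedy (ρ.map Prod.fst) D a fstar gstar)
    (k : ℕ) (hk : 1 ≤ k) :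
    genErr ρ (fstar k) - genErr ρ fρ =
        normRho (ρ.map Prod.fst) (fun x => fstar k x - fρ x) ^ 2 ∧
      normRho (ρ.map Prod.fst) (fun x => fstar k x - fρ x) ^ 2 ≤
        (B * (k : ℝ) ^ (-(1 / 2 : ℝ)) + ε) ^ 2 := by
  have hf : MemLp (fstar k) 2 (ρ.map Prod.fst) := hrun.memLp hD k
  have hh : MemLp (fun x => ∑ i, a i * D i x) 2 (ρ.map Prod.fst) :=
    memLp_finsetSum _ fun i _ => (hD i).const_mul (a i)
  refine ⟨genErr_sub_genErr_of_isRegressionFunction hy hreg hf,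
    pow_le_pow_left₀ (normRho_nonneg _ _) ?_ 2⟩
  rw [normRho_sub_comm, Real.rpow_neg k.cast_nonneg, ← Real.sqrt_eq_rpow, ← div_eq_mul_inv,
    add_comm]
  calc normRho (ρ.map Prod.fst) (fun x => fρ x - fstar k x)
      ≤ normRho (ρ.map Prod.fst) (fun x => fρ x - ∑ i, a i * D i x) +
          normRho (ρ.map Prod.fst) (fun x => (∑ i, a i * D i x) - fstar k x) :=
        normRho_sub_le_normRho_sub_add_normRho_sub (hreg.memLp hy) hh hf
    _ ≤ ε + (∑ i, |a i| * normRho (ρ.map Prod.fst) (D i)) / √k :=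
        add_le_add happrox (hrun.normRho_sub_le_div_sqrt hD hDpos hk)
    _ ≤ ε + B / √k := by gcongr

/-- **Approximation error of the relaxed greedy sequence (Lemma 1 / Proposition 1).**
Suppose `f_ρ ∈ L1^r` with norm at most `B`, witnessed by `h_ρ = ∑ a i • D i` with
`∑ |a i| ≤ B` and `‖f_ρ - h_ρ‖_∞ ≤ B n^{-r}`.  Let `f* 0 = 0` and, for `k ≥ 1`,
`f* k = (1 - 1/k) f* (k-1) + ((∑ |a i| ‖D i‖_ρ) / k) g* k`, where `g* k` maximizes
`⟨h_ρ - (1 - 1/k) f* (k-1), g⟩_ρ` over the symmetrized normalized dictionary.  Then for every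
`k ≥ 1`, `E(f* k) - E(f_ρ) = ‖f* k - f_ρ‖_ρ² ≤ B² (k^{-1/2} + n^{-r})²`. -/
theorem relaxed_greedy_approximation_error
    {X : Type} [MetricSpace X] [CompactSpace X] [MeasurableSpace X] [BorelSpace X]
    (ρ : Measure (X × ℝ)) [IsProbabilityMeasure ρ]
    (M : ℝ) (hM : 0 < M) (hy : ∀ᵐ p ∂ρ, |p.2| ≤ M)
    (fρ : X → ℝ)
    (hreg : (fun p : X × ℝ => fρ p.1) =ᵐ[ρ]
      ρ[(fun p : X × ℝ => p.2)|MeasurableSpace.comap (Prod.fst : X × ℝ → X) inferInstance])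
    (n : ℕ) (hn : 0 < n) (D : Fin n → X → ℝ)
    (hDcont : ∀ i, Continuous (D i)) (hDbd : ∀ i x, |D i x| ≤ 1)
    (hDpos : ∀ i, 0 < normRho (ρ.map Prod.fst) (D i))
    (r B : ℝ) (hr : 0 < r) (hB : 0 < B)
    (a : Fin n → ℝ) (ha : ∑ i, |a i| ≤ B)
    (happrox : ∀ x, |fρ x - ∑ i, a i * D i x| ≤ B * (n : ℝ) ^ (-r))
    (fstar gstar : ℕ → X → ℝ) (hf0 : fstar 0 = 0)
    (hstep : ∀ k : ℕ, 1 ≤ k →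
      gstar k ∈ symDict (ρ.map Prod.fst) D ∧
      (∀ g ∈ symDict (ρ.map Prod.fst) D,
        innerRho (ρ.map Prod.fst)
            (fun x => (∑ i, a i * D i x) - (1 - 1 / (k : ℝ)) * fstar (k - 1) x) g ≤
          innerRho (ρ.map Prod.fst)
            (fun x => (∑ i, a i * D i x) - (1 - 1 / (k : ℝ)) * fstar (k - 1) x) (gstar k)) ∧
      fstar k = fun x => (1 - 1 / (k : ℝ)) * fstar (k - 1) x +
        ((∑ i, |a i| * normRho (ρ.map Prod.fst) (D i)) / (k : ℝ)) * gstar k x) :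
    ∀ k : ℕ, 1 ≤ k →
      genErr ρ (fstar k) - genErr ρ fρ =
          normRho (ρ.map Prod.fst) (fun x => fstar k x - fρ x) ^ 2 ∧
      normRho (ρ.map Prod.fst) (fun x => fstar k x - fρ x) ^ 2 ≤
          B ^ 2 * ((k : ℝ) ^ (-(1 / 2 : ℝ)) + (n : ℝ) ^ (-r)) ^ 2 := by
  intro k hk
  have : IsProbabilityMeasure (ρ.map Prod.fst) :=
    Measure.isProbabilityMeasure_map measurable_fst.aemeasurable
  have hAB : ∑ i, |a i| * normRho (ρ.map Prod.fst) (D i) ≤ B :=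
    (Finset.sum_le_sum fun i _ => mul_le_of_le_one_right (abs_nonneg _)
      (normRho_le_of_abs_le (ae_of_all _ (hDbd i)))).trans ha
  rw [← mul_pow, mul_add]
  exact relaxed_greedy_approximation_error_general ρ
    (MemLp.of_bound measurable_snd.aestronglyMeasurable M hy) fρ hreg n D
    (fun i => MemLp.of_bound (hDcont i).aestronglyMeasurable 1 (ae_of_all _ (hDbd i))) hDpos
    B _ a hAB (normRho_le_of_abs_le (ae_of_all _ happrox)) fstar gstar ⟨hf0, hstep⟩ k hk
end
end

section
/- Let H be a real Hilbert space and g_1, …, g_n ∈ H nonzero vectors. Let h = Σ_{i=1}^n a_i g_i and set B̃ = Σ_{i=1}^n |a_i| ‖g_i‖. Define f_0 = 0 and, for k ≥ 1, f_k = (1 − 1/k) f_{k−1} + (B̃/k) g_k*, where g_k* is chosen to maximize ⟨h − (1 − 1/k) f_{k−1}, g⟩ over the finite set { ± g_i/‖g_i‖ : 1 ≤ i ≤ n }. Then for every k ≥ 1, ‖h − f_k‖ ≤ B̃ k^{-1/2}. -/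
open scoped RealInnerProductSpace
open Finset

/-!
With `r = h - (1 - 1/k) • f (k-1)`, both consecutive errors are displacements from the same point
`k • r`: `k • (h - f k) = k • r - B • gstar k` and `(k-1) • (h - f (k-1)) = k • r - h`. As `h` lies
in `B` times the closed convex hull of the dictionary, the greedy choice gives
`⟪r, h⟫ ≤ ⟪r, B • gstar k⟫`, and expanding the squares yields
`‖k • (h - f k)‖ ^ 2 ≤ ‖(k-1) • (h - f (k-1))‖ ^ 2 + B ^ 2`. Summing,
`‖k • (h - f k)‖ ^ 2 ≤ k * B ^ 2`.
-/

section RelaxedGreedy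

open scoped Pointwise
open NormedSpace (normalize norm_normalize norm_smul_normalize)

theorem sum_smul_mem_sum_smul_of_convex {𝕜 ι E : Type*} [Field 𝕜] [LinearOrder 𝕜]
    [IsStrictOrderedRing 𝕜] [AddCommGroup E] [Module 𝕜 E] {K : Set E} (hK : Convex 𝕜 K)
    (hne : K.Nonempty) {t : Finset ι} {w : ι → 𝕜} {z : ι → E}
    (hw : ∀ i ∈ t, 0 ≤ w i) (hz : ∀ i ∈ t, z i ∈ K) :
    ∑ i ∈ t, w i • z i ∈ (∑ i ∈ t, w i) • K := by
  rcases (sum_nonneg hw).eq_or_lt with hzero | hpos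
  · have hw_zero : ∀ i ∈ t, w i = 0 := (sum_eq_zero_iff_of_nonneg hw).1 hzero.symm
    have hsum : ∑ i ∈ t, w i • z i = 0 := sum_eq_zero fun i hi => by rw [hw_zero i hi, zero_smul]
    rw [hsum, ← hzero, Set.zero_smul_set hne]
    exact Set.mem_zero.2 rfl
  · rw [Set.mem_smul_set_iff_inv_smul_mem₀ hpos.ne']
    exact hK.centerMass_mem hw hpos hz

theorem norm_le_mul_rpow_neg_half_of_norm_smul_sq_le {E : Type*} [SeminormedAddCommGroup E]
    [NormedSpace ℝ E] {x : E} {k B : ℝ} (hk : 0 < k) (hB : 0 ≤ B)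
    (hx : ‖k • x‖ ^ 2 ≤ k * B ^ 2) : ‖x‖ ≤ B * k ^ (-(1 / 2 : ℝ)) := by
  rw [Real.rpow_neg hk.le, ← Real.sqrt_eq_rpow, ← div_eq_mul_inv, le_div_iff₀ (Real.sqrt_pos.2 hk)]
  refine le_of_sq_le_sq ?_ hB
  rw [norm_smul, Real.norm_of_nonneg hk.le] at hx
  refine le_of_mul_le_mul_left ?_ hk
  calc k * (‖x‖ * √k) ^ 2 = (k * ‖x‖) ^ 2 := by rw [mul_pow, Real.sq_sqrt hk.le]; ring
    _ ≤ k * B ^ 2 := hx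

variable {ι H : Type*} [NormedAddCommGroup H] [InnerProductSpace ℝ H]

theorem norm_sub_sq_le_of_inner_le {x y z : H} (hxyz : ⟪x, y⟫ ≤ ⟪x, z⟫) :
    ‖x - z‖ ^ 2 ≤ ‖x - y‖ ^ 2 + ‖z‖ ^ 2 := by
  rw [norm_sub_sq_real, norm_sub_sq_real]
  linarith [sq_nonneg ‖y‖]

theorem inner_le_of_mem_smul_closedConvexHull {D : Set H} {B c : ℝ} {r h : H} (hB : 0 ≤ B)
    (hh : h ∈ B • closedConvexHull ℝ D) (hD : ∀ v ∈ D, ⟪r, v⟫ ≤ c) : ⟪r, h⟫ ≤ B * c := by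
  obtain ⟨u, hu, rfl⟩ := hh
  have hconvex : Convex ℝ {v : H | ⟪r, v⟫ ≤ c} :=
    convex_halfSpace_le (innerₛₗ ℝ r).isLinear c
  have hclosed : IsClosed {v : H | ⟪r, v⟫ ≤ c} := isClosed_le (by fun_prop) continuous_const
  have hru : ⟪r, u⟫ ≤ c := closedConvexHull_min hD hconvex hclosed hu
  rw [real_inner_smul_right]
  exact mul_le_mul_of_nonneg_left hru hB

/-- The vectors `± g i / ‖g i‖`: the dictionary `g` normalized and closed under negation. -/
def symmetrizedDictionary (g : ι → H) : Set H :=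
  {v | ∃ i, v = normalize (g i) ∨ v = -normalize (g i)}

theorem norm_eq_one_of_mem_symmetrizedDictionary {g : ι → H} (hg : ∀ i, g i ≠ 0) {v : H}
    (hv : v ∈ symmetrizedDictionary g) : ‖v‖ = 1 := by
  obtain ⟨i, rfl | rfl⟩ := hv
  · exact norm_normalize (hg i)
  · rw [norm_neg, norm_normalize (hg i)]

theorem exists_mem_symmetrizedDictionary_smul_eq (g : ι → H) (c : ℝ) (i : ι) :
    ∃ v ∈ symmetrizedDictionary g, (|c| * ‖g i‖) • v = c • g i := by
  rcases abs_choice c with hc | hc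
  · refine ⟨normalize (g i), ⟨i, .inl rfl⟩, ?_⟩
    rw [hc, mul_smul, norm_smul_normalize]
  · refine ⟨-normalize (g i), ⟨i, .inr rfl⟩, ?_⟩
    rw [hc, mul_smul, smul_neg, norm_smul_normalize, neg_smul_neg]

theorem sum_smul_mem_smul_closedConvexHull_symmetrizedDictionary [Fintype ι] (g : ι → H)
    (a : ι → ℝ) (hne : (symmetrizedDictionary g).Nonempty) :
    ∑ i, a i • g i ∈ (∑ i, |a i| * ‖g i‖) • closedConvexHull ℝ (symmetrizedDictionary g) := by
  choose v hv hvg using fun i => exists_mem_symmetrizedDictionary_smul_eq g (a i) i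
  simp only [← hvg]
  exact sum_smul_mem_sum_smul_of_convex convex_closedConvexHull
    (hne.mono subset_closedConvexHull) (fun i _ => by positivity)
    fun i _ => subset_closedConvexHull (hv i)

/-- One step `f ↦ f₁` of the relaxed greedy algorithm with dictionary `D`, scale `B` and target `h`:
the atom `s` maximizes the inner product with the shrunken residual over `D`, and `f₁` averages
`f` and `B • s` with weights `1 - 1 / k` and `1 / k`. The step number `k` is allowed to be real. -/
structure IsRelaxedGreedyStep (D : Set H) (B : ℝ) (h : H) (k : ℝ) (f s f₁ : H) : Prop where
  mem : s ∈ D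
  isMaxOn : IsMaxOn (fun v => ⟪h - (1 - 1 / k) • f, v⟫) D s
  eq : f₁ = (1 - 1 / k) • f + (B / k) • s

variable {D : Set H} {B : ℝ} {h : H}

theorem IsRelaxedGreedyStep.norm_smul_error_sq_le {k : ℝ} {f s f₁ : H}
    (hstep : IsRelaxedGreedyStep D B h k f s f₁) (hk : 0 < k) (hB : 0 ≤ B)
    (hD : ∀ v ∈ D, ‖v‖ ≤ 1) (hh : h ∈ B • closedConvexHull ℝ D) :
    ‖k • (h - f₁)‖ ^ 2 ≤ ‖(k - 1) • (h - f)‖ ^ 2 + B ^ 2 := by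
  set r := h - (1 - 1 / k) • f with hr
  have hinner : ⟪k • r, h⟫ ≤ ⟪k • r, B • s⟫ := by
    rw [real_inner_smul_left, real_inner_smul_left, real_inner_smul_right]
    exact mul_le_mul_of_nonneg_left
      (inner_le_of_mem_smul_closedConvexHull hB hh hstep.isMaxOn) hk.le
  have hnew : k • (h - f₁) = k • r - B • s := by
    rw [hstep.eq, hr]
    match_scalars <;> field_simp
  have hold : (k - 1) • (h - f) = k • r - h := by
    rw [hr]
    match_scalars <;> field_simp
  have hatom : ‖B • s‖ ≤ B := by
    rw [norm_smul, Real.norm_of_nonneg hB]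
    exact mul_le_of_le_one_right hB (hD s hstep.mem)
  calc ‖k • (h - f₁)‖ ^ 2 = ‖k • r - B • s‖ ^ 2 := by rw [hnew]
    _ ≤ ‖k • r - h‖ ^ 2 + ‖B • s‖ ^ 2 := norm_sub_sq_le_of_inner_le hinner
    _ ≤ ‖(k - 1) • (h - f)‖ ^ 2 + B ^ 2 := by rw [hold]; gcongr

theorem norm_smul_error_sq_le_of_isRelaxedGreedyStep {f s : ℕ → H} (hB : 0 ≤ B)
    (hD : ∀ v ∈ D, ‖v‖ ≤ 1) (hh : h ∈ B • closedConvexHull ℝ D)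
    (hstep : ∀ k : ℕ, 1 ≤ k → IsRelaxedGreedyStep D B h k (f (k - 1)) (s k) (f k)) (k : ℕ) :
    ‖(k : ℝ) • (h - f k)‖ ^ 2 ≤ k * B ^ 2 := by
  induction k with
  | zero => simp
  | succ k ih =>
    have hsucc := (hstep (k + 1) k.succ_pos).norm_smul_error_sq_le (by positivity) hB hD hh
    rw [Nat.cast_succ, add_sub_cancel_right, Nat.add_sub_cancel] at hsucc
    rw [Nat.cast_succ]
    linarith

theorem relaxed_greedy_hilbert_general {f gstar : ℕ → H} (hB : 0 ≤ B)
    (hD : ∀ v ∈ D, ‖v‖ ≤ 1) (hh : h ∈ B • closedConvexHull ℝ D)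
    (hstep : ∀ k : ℕ, 1 ≤ k → IsRelaxedGreedyStep D B h k (f (k - 1)) (gstar k) (f k))
    (k : ℕ) (hk : 1 ≤ k) : ‖h - f k‖ ≤ B * (k : ℝ) ^ (-(1 / 2 : ℝ)) :=
  norm_le_mul_rpow_neg_half_of_norm_smul_sq_le (by positivity) hB
    (norm_smul_error_sq_le_of_isRelaxedGreedyStep hB hD hh hstep k)

end RelaxedGreedy

/-- **Relaxed greedy algorithm convergence in a Hilbert space.**
Let `g 1, …, g n` be nonzero vectors in a real Hilbert space, `h = ∑ a i • g i`, and
`B̃ = ∑ |a i| * ‖g i‖`.  The relaxed greedy iteration `f 0 = 0`,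
`f k = (1 - 1/k) • f (k-1) + (B̃/k) • gstar k`, where `gstar k` maximizes the inner product with
`h - (1 - 1/k) • f (k-1)` over the symmetrized normalized dictionary `{± g i / ‖g i‖}`,
satisfies `‖h - f k‖ ≤ B̃ * k ^ (-1/2)` for every `k ≥ 1`. -/
theorem relaxed_greedy_hilbert
    {H : Type*} [NormedAddCommGroup H] [InnerProductSpace ℝ H] [CompleteSpace H]
    {n : ℕ} (g : Fin n → H) (hg : ∀ i, g i ≠ 0) (a : Fin n → ℝ)
    (h : H) (hh : h = ∑ i, a i • g i)
    (Btil : ℝ) (hBtil : Btil = ∑ i, |a i| * ‖g i‖)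
    (f gstar : ℕ → H) (hf0 : f 0 = 0)
    (hstep : ∀ k : ℕ, 1 ≤ k →
      gstar k ∈ {v : H | ∃ i, v = ‖g i‖⁻¹ • g i ∨ v = -(‖g i‖⁻¹ • g i)} ∧
      (∀ v ∈ {v : H | ∃ i, v = ‖g i‖⁻¹ • g i ∨ v = -(‖g i‖⁻¹ • g i)},
        ⟪h - (1 - 1 / (k : ℝ)) • f (k - 1), v⟫ ≤ ⟪h - (1 - 1 / (k : ℝ)) • f (k - 1), gstar k⟫) ∧
      f k = (1 - 1 / (k : ℝ)) • f (k - 1) + (Btil / (k : ℝ)) • gstar k) :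
    ∀ k : ℕ, 1 ≤ k → ‖h - f k‖ ≤ Btil * (k : ℝ) ^ (-(1 / 2 : ℝ)) := by
  subst hh hBtil
  have hne : (symmetrizedDictionary g).Nonempty := ⟨gstar 1, (hstep 1 le_rfl).1⟩
  exact relaxed_greedy_hilbert_general (by positivity)
    (fun v hv => (norm_eq_one_of_mem_symmetrizedDictionary hg hv).le)
    (sum_smul_mem_smul_closedConvexHull_symmetrizedDictionary g a hne)
    fun k hk => let ⟨hmem, hmax, heq⟩ := hstep k hk; ⟨hmem, hmax, heq⟩
end

section
/- Let H be a real inner product space, δ > 0, D ⊂ H a finite set, and y, f ∈ H such that ⟨y − f, f⟩ = 0 and |⟨y − f, g⟩| ≤ δ ‖y − f‖ for every g ∈ D. Then for every h = Σ_{g∈D} a_g g with real coefficients a_g, ‖y − f‖ ≤ ‖y − h‖ + δ Σ_{g∈D} |a_g|. -/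
open scoped RealInnerProductSpace
open Finset

section

open scoped InnerProductSpace

variable {𝕜 E ι : Type*} [RCLike 𝕜] [SeminormedAddCommGroup E] [InnerProductSpace 𝕜 E]

lemma norm_inner_sum_smul_le {s : Finset ι} {v : ι → E} {x : E} {c : ℝ}
    (hc : ∀ i ∈ s, ‖⟪x, v i⟫_𝕜‖ ≤ c) (a : ι → 𝕜) :
    ‖⟪x, ∑ i ∈ s, a i • v i⟫_𝕜‖ ≤ c * ∑ i ∈ s, ‖a i‖ := by
  simp only [inner_sum, inner_smul_right, mul_sum]
  refine norm_sum_le_of_le s fun i hi => ?_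
  calc ‖a i * ⟪x, v i⟫_𝕜‖ = ‖⟪x, v i⟫_𝕜‖ * ‖a i‖ := by rw [norm_mul, mul_comm]
    _ ≤ c * ‖a i‖ := by gcongr; exact hc i hi

lemma norm_sub_le_norm_sub_add_of_re_inner_le {y f h : E} {ε : ℝ} (hε : 0 ≤ ε)
    (hf : 0 ≤ RCLike.re ⟪y - f, f⟫_𝕜) (hh : RCLike.re ⟪y - f, h⟫_𝕜 ≤ ε * ‖y - f‖) :
    ‖y - f‖ ≤ ‖y - h‖ + ε := by
  rcases (norm_nonneg (y - f)).eq_or_lt with hzero | hpos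
  · rw [← hzero]
    positivity
  · refine le_of_mul_le_mul_left ?_ hpos
    calc ‖y - f‖ * ‖y - f‖
        = RCLike.re ⟪y - f, y - f⟫_𝕜 := (inner_self_eq_norm_mul_norm (y - f)).symm
      _ = RCLike.re ⟪y - f, y - h⟫_𝕜 + RCLike.re ⟪y - f, h⟫_𝕜 - RCLike.re ⟪y - f, f⟫_𝕜 := by
          simp only [inner_sub_right, map_sub]
          ring
      _ ≤ ‖y - f‖ * ‖y - h‖ + ε * ‖y - f‖ := by
          linarith [re_inner_le_norm (𝕜 := 𝕜) (y - f) (y - h)]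
      _ = ‖y - f‖ * (‖y - h‖ + ε) := by ring

theorem residual_bound_of_threshold_fail_general {s : Finset ι} {v : ι → E} {y f : E} {δ : ℝ}
    (hδ : 0 ≤ δ) (hf : 0 ≤ RCLike.re ⟪y - f, f⟫_𝕜)
    (hthresh : ∀ i ∈ s, ‖⟪y - f, v i⟫_𝕜‖ ≤ δ * ‖y - f‖) (a : ι → 𝕜) :
    ‖y - f‖ ≤ ‖y - ∑ i ∈ s, a i • v i‖ + δ * ∑ i ∈ s, ‖a i‖ := by
  refine norm_sub_le_norm_sub_add_of_re_inner_le (𝕜 := 𝕜) (by positivity) hf ?_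
  calc RCLike.re ⟪y - f, ∑ i ∈ s, a i • v i⟫_𝕜
      ≤ ‖⟪y - f, ∑ i ∈ s, a i • v i⟫_𝕜‖ := RCLike.re_le_norm _
    _ ≤ δ * ‖y - f‖ * ∑ i ∈ s, ‖a i‖ := norm_inner_sum_smul_le hthresh a
    _ = δ * (∑ i ∈ s, ‖a i‖) * ‖y - f‖ := by ring

end

/-- **Residual bound under the δ-greedy threshold failure condition.**
In a real inner product space, if `⟨y - f, f⟩ = 0` and no dictionary atom `g ∈ D` passes the
`δ`-greedy threshold for the residual `y - f` (i.e. `|⟨y - f, g⟩| ≤ δ ‖y - f‖`), then for every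
`h = ∑_{g ∈ D} a_g • g` one has `‖y - f‖ ≤ ‖y - h‖ + δ * ∑_{g ∈ D} |a_g|`. -/
theorem residual_bound_of_threshold_fail
    {H : Type*} [NormedAddCommGroup H] [InnerProductSpace ℝ H]
    (δ : ℝ) (hδ : 0 < δ) (D : Finset H) (y f : H)
    (horth : ⟪y - f, f⟫ = 0)
    (hthresh : ∀ g ∈ D, |⟪y - f, g⟫| ≤ δ * ‖y - f‖) :
    ∀ a : H → ℝ, ‖y - f‖ ≤ ‖y - ∑ g ∈ D, a g • g‖ + δ * ∑ g ∈ D, |a g| := by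
  exact residual_bound_of_threshold_fail_general (𝕜 := ℝ) hδ.le horth.ge hthresh
end
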